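/- For n ≥ 3, the graded Betti number β_{n,n+2}(S/in_<(I)) equals n − 1, where in_<(I) = (y_i y_j : 1 ≤ i < j ≤ n) + (x y_k z : 1 ≤ k ≤ n−1) + (x y_n² z) in S = K[x, y_1, …, y_n, z]. -/

import Mathlib

open MvPolynomial

noncomputable def xP (K : Type*) [Field K] (n : ℕ) : MvPolynomial (Fin (n + 2)) K := X 0
noncomputable def zP (K : Type*) [Field K] (n : ℕ) : MvPolynomial (Fin (n + 2)) K :=
  X (Fin.last (n + 1))
noncomputable def yP (K : Type*) [Field K] (n : ℕ) (i : Fin n) : MvPolynomial (Fin (n + 2)) K :=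
  X i.succ.castSucc

/-- The join-meet ideal `I` of the diamond lattice `D_{n+2}`. -/
noncomputable def diamondIdeal (K : Type*) [Field K] (n : ℕ) :
    Ideal (MvPolynomial (Fin (n + 2)) K) :=
  Ideal.span {f | ∃ i j : Fin n, i < j ∧ f = yP K n i * yP K n j - xP K n * zP K n}

/-- The initial ideal `in_<(I)` of `I` w.r.t. the reverse lexicographic order induced by
`x > y_1 > ⋯ > y_n > z`, as computed in the paper:
`(y_i y_j : i < j) + (x y_k z : k ≤ n-1) + (x y_n² z)`. -/
noncomputable def diamondIni (K : Type*) [Field K] (n : ℕ) (hn : 1 ≤ n) :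
    Ideal (MvPolynomial (Fin (n + 2)) K) :=
  Ideal.span
    ({f | ∃ i j : Fin n, i < j ∧ f = yP K n i * yP K n j} ∪
      {f | ∃ k : Fin n, (k : ℕ) < n - 1 ∧ f = xP K n * yP K n k * zP K n} ∪
      {xP K n * (yP K n ⟨n - 1, by omega⟩) ^ 2 * zP K n})

def mdeg {σ : Type*} (m : σ →₀ ℕ) : ℕ := m.sum fun _ e => e

/-- A minimal graded free resolution
`⋯ → F_{i+1} → F_i → ⋯ → F_0 → S/I → 0` of `S/I` over `S = K[x_s : s ∈ σ]`.
`F_i` is free with finite homogeneous basis `B i`, the basis element `b : B i` having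
degree `deg i b`; the differentials are graded and have entries in the graded maximal
ideal (minimality); `ε` is a lift of the augmentation `F_0 → S/I`. -/
structure MinGradedFreeRes (K : Type*) [Field K] (σ : Type*) (I : Ideal (MvPolynomial σ K)) where
  B : ℕ → Type
  finB : ∀ i, Finite (B i)
  deg : ∀ i, B i → ℕ
  d : ∀ i, ((B (i + 1)) →₀ MvPolynomial σ K) →ₗ[MvPolynomial σ K] ((B i) →₀ MvPolynomial σ K)
  ε : ((B 0) →₀ MvPolynomial σ K) →ₗ[MvPolynomial σ K] MvPolynomial σ K
  ε_homog : ∀ b : B 0, (ε (Finsupp.single b 1)).IsHomogeneous (deg 0 b)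
  surj : ∀ s : MvPolynomial σ K, ∃ t, ε t - s ∈ I
  exact0 : LinearMap.range (d 0) = Submodule.comap ε (I : Submodule _ _)
  exact : ∀ i, LinearMap.range (d (i + 1)) = LinearMap.ker (d i)
  homog : ∀ i (b : B (i + 1)) (c : B i),
    ∀ m ∈ ((d i (Finsupp.single b 1)) c).support, mdeg m + deg i c = deg (i + 1) b
  minimal : ∀ i (b : B (i + 1)) (c : B i), coeff 0 ((d i (Finsupp.single b 1)) c) = 0

/-- The graded Betti number `β_{i,j}(S/I)` read off from a minimal graded free resolution:
the number of basis elements of `F_i` of degree `j`. -/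
noncomputable def MinGradedFreeRes.betti {K : Type*} [Field K] {σ : Type*}
    {I : Ideal (MvPolynomial σ K)} (F : MinGradedFreeRes K σ I) (i j : ℕ) : ℕ :=
  Nat.card {b : F.B i // F.deg i b = j}

section General

variable {K : Type*} [Field K] {σ : Type*}

lemma mdeg_eq (m : σ →₀ ℕ) : mdeg m = m.degree := rfl

lemma mdeg_add' (a b : σ →₀ ℕ) : mdeg (a + b) = mdeg a + mdeg b := by
  simp [mdeg_eq]

lemma mdeg_zero' : mdeg (0 : σ →₀ ℕ) = 0 := by simp [mdeg]

lemma isHomogeneous_iff_mdeg (p : MvPolynomial σ K) (j : ℕ) :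
    p.IsHomogeneous j ↔ ∀ m, coeff m p ≠ 0 → mdeg m = j := by
  simp only [mdeg_eq, Finsupp.degree_eq_weight_one]
  rfl

lemma coeff_zero_mul' (p q : MvPolynomial σ K) :
    coeff 0 (p * q) = coeff 0 p * coeff 0 q := by
  simp [← constantCoeff_eq]

/-- `v` is homogeneous of degree `j` in the graded free module with basis degrees `deg`. -/
def IsHomV {C : Type*} (deg : C → ℕ) (v : C →₀ MvPolynomial σ K) (j : ℕ) : Prop :=
  ∀ c m, coeff m (v c) ≠ 0 → mdeg m + deg c = j

/-- A linear map between graded free modules of degree shift `e`. -/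
def IsGrMap {B C : Type*} (degB : B → ℕ) (degC : C → ℕ) (e : ℕ)
    (f : (B →₀ MvPolynomial σ K) →ₗ[MvPolynomial σ K] (C →₀ MvPolynomial σ K)) : Prop :=
  ∀ b, IsHomV degC (f (Finsupp.single b 1)) (degB b + e)

lemma lin_expand {B M : Type*} [Fintype B] [AddCommGroup M] [Module (MvPolynomial σ K) M]
    (f : (B →₀ MvPolynomial σ K) →ₗ[MvPolynomial σ K] M) (w : B →₀ MvPolynomial σ K) :
    f w = ∑ b, w b • f (Finsupp.single b 1) := by
  classical
  conv_lhs => rw [← Finsupp.univ_sum_single w]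
  rw [map_sum]
  refine Finset.sum_congr rfl fun b _ => ?_
  rw [← map_smul, Finsupp.smul_single, smul_eq_mul, mul_one]

lemma coeff_lin {B C : Type*} [Fintype B]
    (f : (B →₀ MvPolynomial σ K) →ₗ[MvPolynomial σ K] (C →₀ MvPolynomial σ K))
    (w : B →₀ MvPolynomial σ K) (c : C) :
    (f w) c = ∑ b, w b * (f (Finsupp.single b 1)) c := by
  rw [lin_expand f w, Finsupp.finsetSum_apply]
  simp

/-- Projection to the degree `j` part. -/
noncomputable def projV {C : Type*} [Finite C] (deg : C → ℕ) (j : ℕ)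
    (v : C →₀ MvPolynomial σ K) : C →₀ MvPolynomial σ K :=
  Finsupp.equivFunOnFinite.symm fun c =>
    if deg c ≤ j then homogeneousComponent (j - deg c) (v c) else 0

lemma coeff_projV {C : Type*} [Finite C] (deg : C → ℕ) (j : ℕ)
    (v : C →₀ MvPolynomial σ K) (c : C) (m : σ →₀ ℕ) :
    coeff m (projV deg j v c) = if mdeg m + deg c = j then coeff m (v c) else 0 := by
  have hmd := mdeg_eq m
  simp only [projV, Finsupp.equivFunOnFinite_symm_apply_apply]
  by_cases h1 : deg c ≤ j
  · rw [if_pos h1, coeff_homogeneousComponent]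
    by_cases h2 : mdeg m + deg c = j
    · rw [if_pos h2, if_pos (by omega)]
    · rw [if_neg h2, if_neg (by omega)]
  · rw [if_neg h1, if_neg (by omega), coeff_zero]

lemma projV_isHom {C : Type*} [Finite C] (deg : C → ℕ) (j : ℕ)
    (v : C →₀ MvPolynomial σ K) : IsHomV deg (projV deg j v) j := by
  intro c m h
  rw [coeff_projV] at h
  by_contra h'
  simp [h'] at h

lemma map_projV {B C : Type*} [Finite B] [Finite C] {degB : B → ℕ} {degC : C → ℕ}
    (f : (B →₀ MvPolynomial σ K) →ₗ[MvPolynomial σ K] (C →₀ MvPolynomial σ K))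
    (hf : IsGrMap degB degC 0 f) (j : ℕ) (w : B →₀ MvPolynomial σ K) :
    f (projV degB j w) = projV degC j (f w) := by
  classical
  cases nonempty_fintype B
  ext c m
  rw [coeff_projV, coeff_lin, coeff_lin f w, coeff_sum, coeff_sum]
  have key : ∀ b, coeff m (projV degB j w b * f (Finsupp.single b 1) c) =
      if mdeg m + degC c = j then coeff m (w b * f (Finsupp.single b 1) c) else 0 := by
    intro b
    rw [coeff_mul, coeff_mul]
    have h1 : ∀ x ∈ Finset.HasAntidiagonal.antidiagonal m,
        coeff x.1 (projV degB j w b) * coeff x.2 (f (Finsupp.single b 1) c) =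
        if mdeg m + degC c = j then coeff x.1 (w b) * coeff x.2 (f (Finsupp.single b 1) c)
          else 0 := by
      intro x hx
      rw [Finset.HasAntidiagonal.mem_antidiagonal] at hx
      by_cases h0 : coeff x.2 (f (Finsupp.single b 1) c) = 0
      · simp [h0]
      · have h2 := hf b c x.2 h0
        rw [coeff_projV, ← hx, mdeg_add']
        by_cases h3 : mdeg x.1 + degB b = j
        · rw [if_pos h3, if_pos (by omega)]
        · rw [if_neg h3, if_neg (by omega), zero_mul]
    rw [Finset.sum_congr rfl h1]
    split_ifs
    · rfl
    · simp
  rw [Finset.sum_congr rfl fun b _ => key b]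
  split_ifs
  · rfl
  · simp

lemma exists_hom_preimage {B C : Type*} [Finite B] [Finite C] {degB : B → ℕ} {degC : C → ℕ}
    (f : (B →₀ MvPolynomial σ K) →ₗ[MvPolynomial σ K] (C →₀ MvPolynomial σ K))
    (hf : IsGrMap degB degC 0 f) (j : ℕ) (v : C →₀ MvPolynomial σ K)
    (hv : IsHomV degC v j) (h : v ∈ LinearMap.range f) :
    ∃ w, IsHomV degB w j ∧ f w = v := by
  obtain ⟨w, rfl⟩ := h
  refine ⟨projV degB j w, projV_isHom _ _ _, ?_⟩
  rw [map_projV f hf]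
  ext c m
  rw [coeff_projV]
  split_ifs with h
  · rfl
  · by_contra h'
    exact h (hv c m (Ne.symm h'))

lemma exists_lift_gr {A B C : Type*} [Finite B] [Finite C]
    {degA : A → ℕ} {degB : B → ℕ} {degC : C → ℕ} {e : ℕ}
    (g : (A →₀ MvPolynomial σ K) →ₗ[MvPolynomial σ K] (C →₀ MvPolynomial σ K))
    (hg : IsGrMap degA degC e g)
    (d : (B →₀ MvPolynomial σ K) →ₗ[MvPolynomial σ K] (C →₀ MvPolynomial σ K))
    (hd : IsGrMap degB degC 0 d) (h : ∀ x, g x ∈ LinearMap.range d) :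
    ∃ g' : (A →₀ MvPolynomial σ K) →ₗ[MvPolynomial σ K] (B →₀ MvPolynomial σ K),
      IsGrMap degA degB e g' ∧ ∀ x, d (g' x) = g x := by
  choose w hw hw' using fun a => exists_hom_preimage d hd (degA a + e) _ (hg a) (h _)
  refine ⟨Finsupp.linearCombination _ w, ?_, ?_⟩
  · intro a
    simpa using hw a
  · intro x
    have : d ∘ₗ Finsupp.linearCombination _ w = g := by
      apply Finsupp.lhom_ext'
      intro a
      ext1
      simp [hw']
    exact LinearMap.congr_fun this x

lemma exists_lift_lin {A M N : Type*} [AddCommGroup M] [Module (MvPolynomial σ K) M]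
    [AddCommGroup N] [Module (MvPolynomial σ K) N]
    (g : (A →₀ MvPolynomial σ K) →ₗ[MvPolynomial σ K] N)
    (d : M →ₗ[MvPolynomial σ K] N) (h : ∀ x, g x ∈ LinearMap.range d) :
    ∃ g' : (A →₀ MvPolynomial σ K) →ₗ[MvPolynomial σ K] M, ∀ x, d (g' x) = g x := by
  choose w hw using fun a => h (Finsupp.single a 1)
  refine ⟨Finsupp.linearCombination _ w, ?_⟩
  intro x
  have : d ∘ₗ Finsupp.linearCombination _ w = g := by
    apply Finsupp.lhom_ext'
    intro a
    ext1
    simp [hw]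
  exact LinearMap.congr_fun this x

namespace MinGradedFreeRes

variable {I I' : Ideal (MvPolynomial σ K)}

lemma isGr (F : MinGradedFreeRes K σ I) (i : ℕ) :
    IsGrMap (F.deg (i + 1)) (F.deg i) 0 (F.d i) := by
  intro b c m h
  simpa using F.homog i b c m (by simpa [mem_support_iff] using h)

lemma coeff_zero_d (F : MinGradedFreeRes K σ I) (i : ℕ) (x) (c : F.B i) :
    coeff 0 (F.d i x c) = 0 := by
  classical
  have := F.finB (i + 1)
  cases nonempty_fintype (F.B (i + 1))
  rw [coeff_lin, coeff_sum]
  refine Finset.sum_eq_zero fun b _ => ?_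
  rw [coeff_zero_mul', F.minimal, mul_zero]

lemma coeff_zero_map_d {C : Type*} (F : MinGradedFreeRes K σ I) (i : ℕ)
    (h : (F.B i →₀ MvPolynomial σ K) →ₗ[MvPolynomial σ K] (C →₀ MvPolynomial σ K)) (x) (c : C) :
    coeff 0 (h (F.d i x) c) = 0 := by
  classical
  have := F.finB i
  cases nonempty_fintype (F.B i)
  rw [coeff_lin, coeff_sum]
  refine Finset.sum_eq_zero fun b _ => ?_
  rw [coeff_zero_mul', F.coeff_zero_d, zero_mul]

/-- There is a degree zero element of `F_0` mapping to `1`. -/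
lemma exists_one (F : MinGradedFreeRes K σ I) (hI : ∀ p ∈ I, coeff 0 p = 0) :
    ∃ t, IsHomV (F.deg 0) t 0 ∧ F.ε t = 1 := by
  classical
  have := F.finB 0
  cases nonempty_fintype (F.B 0)
  obtain ⟨t, ht⟩ := F.surj 1
  have ht0 := hI _ ht
  have key : ∀ c : F.B 0, F.deg 0 c = 0 →
      F.ε (Finsupp.single c 1) = C (coeff 0 (F.ε (Finsupp.single c 1))) := by
    intro c hc
    have := F.ε_homog c
    rw [hc, isHomogeneous_iff_mdeg] at this
    ext m
    rw [coeff_C]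
    split_ifs with h
    · rw [h]
    · by_contra h'
      have := this m h'
      rw [mdeg_eq, Finsupp.degree_eq_zero_iff] at this
      exact h this.symm
  have key2 : ∀ c : F.B 0, F.deg 0 c ≠ 0 → coeff 0 (F.ε (Finsupp.single c 1)) = 0 := by
    intro c hc
    by_contra h
    have := (isHomogeneous_iff_mdeg _ _).1 (F.ε_homog c) 0 h
    rw [mdeg_zero'] at this
    exact hc this.symm
  let t' : F.B 0 →₀ MvPolynomial σ K := Finsupp.equivFunOnFinite.symm fun c =>
    if F.deg 0 c = 0 then C (coeff 0 (t c)) else 0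
  have ht' : ∀ c, t' c = if F.deg 0 c = 0 then C (coeff 0 (t c)) else 0 := fun c => rfl
  refine ⟨t', ?_, ?_⟩
  · intro c m hm
    rw [ht'] at hm
    split_ifs at hm with h
    · rw [coeff_C] at hm
      split_ifs at hm with h2
      · rw [← h2, h, mdeg_zero']
      · simp at hm
    · simp at hm
  · have h1 : F.ε t' = C (coeff 0 (F.ε t)) := by
      rw [lin_expand F.ε t', lin_expand F.ε t, coeff_sum, map_sum]
      refine Finset.sum_congr rfl fun c _ => ?_
      rw [ht', smul_eq_mul, smul_eq_mul, coeff_zero_mul', map_mul]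
      split_ifs with h
      · rw [← key c h]
      · rw [key2 c h]; simp
    rw [coeff_sub, sub_eq_zero] at ht0
    rw [h1, ht0]; simp

lemma exists_base (F : MinGradedFreeRes K σ I) (G : MinGradedFreeRes K σ I')
    (hI : ∀ p ∈ I, coeff 0 p = 0) {f : MvPolynomial σ K} {e : ℕ} (hf : f.IsHomogeneous e) :
    ∃ φ : (G.B 0 →₀ MvPolynomial σ K) →ₗ[MvPolynomial σ K] (F.B 0 →₀ MvPolynomial σ K),
      IsGrMap (G.deg 0) (F.deg 0) e φ ∧ ∀ x, F.ε (φ x) = f * G.ε x := by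
  classical
  obtain ⟨t, ht, ht1⟩ := F.exists_one hI
  refine ⟨(LinearMap.toSpanSingleton _ _ t) ∘ₗ (f • G.ε), ?_, ?_⟩
  · intro b c m hm
    have h1 := (isHomogeneous_iff_mdeg _ _).1 (hf.mul (G.ε_homog b))
    simp only [LinearMap.comp_apply, LinearMap.smul_apply, LinearMap.toSpanSingleton_apply,
      Finsupp.smul_apply, smul_eq_mul] at hm
    rw [coeff_mul] at hm
    obtain ⟨⟨p, q⟩, hpq, hne⟩ := Finset.exists_ne_zero_of_sum_ne_zero hm
    rw [Finset.HasAntidiagonal.mem_antidiagonal] at hpq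
    have h2 := h1 p (left_ne_zero_of_mul hne)
    have h3 := ht c q (right_ne_zero_of_mul hne)
    simp only at hpq
    rw [← hpq, mdeg_add']
    omega
  · intro x
    simp [ht1]

lemma exists_step (F : MinGradedFreeRes K σ I) (G : MinGradedFreeRes K σ I') {e : ℕ} (i : ℕ)
    (φ : (G.B i →₀ MvPolynomial σ K) →ₗ[MvPolynomial σ K] (F.B i →₀ MvPolynomial σ K))
    (hφ : IsGrMap (G.deg i) (F.deg i) e φ)
    (h : ∀ x, φ (G.d i x) ∈ LinearMap.range (F.d i)) :
    ∃ φ' : (G.B (i + 1) →₀ MvPolynomial σ K) →ₗ[MvPolynomial σ K]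
        (F.B (i + 1) →₀ MvPolynomial σ K),
      IsGrMap (G.deg (i + 1)) (F.deg (i + 1)) e φ' ∧ (∀ x, F.d i (φ' x) = φ (G.d i x)) ∧
      ∀ x, φ' (G.d (i + 1) x) ∈ LinearMap.range (F.d (i + 1)) := by
  classical
  have := F.finB (i + 1)
  have := F.finB i
  have := G.finB i
  cases nonempty_fintype (G.B i)
  have hgr : IsGrMap (G.deg (i + 1)) (F.deg i) e (φ ∘ₗ G.d i) := by
    intro b c m hm
    rw [LinearMap.comp_apply, coeff_lin, coeff_sum] at hm
    obtain ⟨b', _, hb'⟩ := Finset.exists_ne_zero_of_sum_ne_zero hm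
    rw [coeff_mul] at hb'
    obtain ⟨⟨p, q⟩, hpq, hne⟩ := Finset.exists_ne_zero_of_sum_ne_zero hb'
    rw [Finset.HasAntidiagonal.mem_antidiagonal] at hpq
    have h2 := G.isGr i b b' p (left_ne_zero_of_mul hne)
    have h3 := hφ b' c q (right_ne_zero_of_mul hne)
    simp only at hpq
    rw [← hpq, mdeg_add']
    omega
  obtain ⟨φ', h1, h2⟩ := exists_lift_gr (φ ∘ₗ G.d i) hgr (F.d i) (F.isGr i) h
  refine ⟨φ', h1, h2, ?_⟩
  intro x
  rw [F.exact, LinearMap.mem_ker, h2, LinearMap.comp_apply]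
  have : G.d (i + 1) x ∈ LinearMap.ker (G.d i) := by
    rw [← G.exact]; exact ⟨x, rfl⟩
  rw [LinearMap.mem_ker.1 this, map_zero]

lemma d_d (F : MinGradedFreeRes K σ I) (i : ℕ) (x) : F.d i (F.d (i + 1) x) = 0 := by
  have : F.d (i + 1) x ∈ LinearMap.ker (F.d i) := by
    rw [← F.exact]; exact ⟨x, rfl⟩
  exact this

lemma exists_inv (F G : MinGradedFreeRes K σ I) (hI : ∀ p ∈ I, coeff 0 p = 0) (i : ℕ) :
    ∃ (φ : (F.B i →₀ MvPolynomial σ K) →ₗ[MvPolynomial σ K] (G.B i →₀ MvPolynomial σ K))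
      (ψ : (G.B i →₀ MvPolynomial σ K) →ₗ[MvPolynomial σ K] (F.B i →₀ MvPolynomial σ K))
      (h : (F.B i →₀ MvPolynomial σ K) →ₗ[MvPolynomial σ K] (F.B (i + 1) →₀ MvPolynomial σ K)),
      IsGrMap (F.deg i) (G.deg i) 0 φ ∧ IsGrMap (G.deg i) (F.deg i) 0 ψ ∧
      (∀ x, φ (F.d i x) ∈ LinearMap.range (G.d i)) ∧
      (∀ x, ψ (G.d i x) ∈ LinearMap.range (F.d i)) ∧
      (∀ x, ψ (φ (F.d i x)) - F.d i x - F.d i (h (F.d i x)) = 0) ∧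
      (∀ x c, coeff 0 (ψ (φ x) c) = coeff 0 (x c)) := by
  induction i with
  | zero =>
    have h1 : (1 : MvPolynomial σ K).IsHomogeneous 0 := isHomogeneous_one _ _
    obtain ⟨φ, hφ, hφ'⟩ := G.exists_base F hI h1
    obtain ⟨ψ, hψ, hψ'⟩ := F.exists_base G hI h1
    simp only [one_mul] at hφ' hψ'
    obtain ⟨h, hh⟩ := exists_lift_lin (ψ ∘ₗ φ - LinearMap.id) (F.d 0) (by
      intro x
      rw [F.exact0, Submodule.mem_comap]
      simp [hφ', hψ'])
    refine ⟨φ, ψ, h, hφ, hψ, ?_, ?_, ?_, ?_⟩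
    · intro x
      have : F.d 0 x ∈ LinearMap.range (F.d 0) := ⟨x, rfl⟩
      rw [F.exact0, Submodule.mem_comap] at this
      rw [G.exact0, Submodule.mem_comap, hφ']
      exact this
    · intro x
      have : G.d 0 x ∈ LinearMap.range (G.d 0) := ⟨x, rfl⟩
      rw [G.exact0, Submodule.mem_comap] at this
      rw [F.exact0, Submodule.mem_comap, hψ']
      exact this
    · intro x
      rw [hh]; simp
    · intro x c
      have h2 := F.coeff_zero_d 0 (h x) c
      rw [hh] at h2
      simpa [sub_eq_zero] using h2
  | succ i ih =>
    obtain ⟨φ, ψ, h, hφ, hψ, hφr, hψr, hh, -⟩ := ih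
    obtain ⟨φ', hφ', hφc, hφr'⟩ := G.exists_step F i φ hφ hφr
    obtain ⟨ψ', hψ', hψc, hψr'⟩ := F.exists_step G i ψ hψ hψr
    obtain ⟨h', hh'⟩ := exists_lift_lin (ψ' ∘ₗ φ' - LinearMap.id - h ∘ₗ F.d i) (F.d (i + 1)) (by
      intro x
      rw [F.exact, LinearMap.mem_ker]
      simp only [LinearMap.sub_apply, LinearMap.comp_apply, LinearMap.id_apply, map_sub, hψc, hφc]
      exact hh x)
    refine ⟨φ', ψ', h', hφ', hψ', hφr', hψr', ?_, ?_⟩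
    · intro x
      rw [hh']
      simp [F.d_d]
    · intro x c
      have h2 := F.coeff_zero_d (i + 1) (h' x) c
      rw [hh'] at h2
      have h3 := F.coeff_zero_map_d i h x c
      simp only [LinearMap.sub_apply, LinearMap.comp_apply, LinearMap.id_apply,
        Finsupp.sub_apply, coeff_sub, h3, sub_zero] at h2
      exact sub_eq_zero.1 h2

lemma betti_le (F G : MinGradedFreeRes K σ I) (hI : ∀ p ∈ I, coeff 0 p = 0) (i j : ℕ) :
    F.betti i j ≤ G.betti i j := by
  classical
  have := F.finB i
  have := G.finB i
  cases nonempty_fintype (F.B i)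
  cases nonempty_fintype (G.B i)
  obtain ⟨φ, ψ, -, hφ, hψ, -, -, -, hinv⟩ := F.exists_inv G hI i
  let A : Matrix {c : G.B i // G.deg i c = j} {b : F.B i // F.deg i b = j} K :=
    fun c b => coeff 0 (φ (Finsupp.single b.1 1) c.1)
  let A' : Matrix {b : F.B i // F.deg i b = j} {c : G.B i // G.deg i c = j} K :=
    fun b c => coeff 0 (ψ (Finsupp.single c.1 1) b.1)
  have hA : A' * A = 1 := by
    ext b b'
    have h1 := hinv (Finsupp.single b'.1 1) b.1
    rw [coeff_lin, coeff_sum] at h1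
    have h2 : ∀ c : G.B i, coeff 0 (φ (Finsupp.single b'.1 1) c * ψ (Finsupp.single c 1) b.1) =
        coeff 0 (ψ (Finsupp.single c 1) b.1) * coeff 0 (φ (Finsupp.single b'.1 1) c) := by
      intro c
      rw [coeff_zero_mul', mul_comm]
    simp only [h2] at h1
    rw [Matrix.mul_apply]
    have h3 : ∑ c : {c : G.B i // G.deg i c = j}, A' b c * A c b' =
        ∑ c : G.B i, coeff 0 (ψ (Finsupp.single c 1) b.1) *
          coeff 0 (φ (Finsupp.single b'.1 1) c) := by
      symm
      rw [← Finset.sum_filter_of_ne (p := fun c => G.deg i c = j)]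
      · exact Finset.sum_subtype _ (by simp) _
      · intro c _ hc
        have := hφ b'.1 c 0 (right_ne_zero_of_mul hc)
        rw [mdeg_zero'] at this
        have := b'.2
        omega
    rw [h3, h1, Finsupp.single_apply, Matrix.one_apply]
    by_cases hb : b = b'
    · simp [hb]
    · have : b'.1 ≠ b.1 := fun h => hb (Subtype.ext h.symm)
      simp [hb, this]
  have hinj : Function.Injective (Matrix.toLin' A) := by
    apply Function.LeftInverse.injective (g := Matrix.toLin' A')
    intro x
    rw [← LinearMap.comp_apply, ← Matrix.toLin'_mul, hA]; simp
  have := LinearMap.finrank_le_finrank_of_injective hinj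
  simpa [betti, Nat.card_eq_fintype_card] using this

lemma betti_eq (F G : MinGradedFreeRes K σ I) (hI : ∀ p ∈ I, coeff 0 p = 0) (i j : ℕ) :
    F.betti i j = G.betti i j :=
  le_antisymm (F.betti_le G hI i j) (G.betti_le F hI i j)

end MinGradedFreeRes

end General
section Cone

variable {K : Type*} [Field K] {σ : Type*} {I I' : Ideal (MvPolynomial σ K)}

lemma exists_chain_map (F : MinGradedFreeRes K σ I) (G : MinGradedFreeRes K σ I')
    (hI : ∀ p ∈ I, coeff 0 p = 0) {f : MvPolynomial σ K} {e : ℕ} (hf : f.IsHomogeneous e)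
    (hcol : ∀ p, p ∈ I' ↔ f * p ∈ I) :
    ∃ φ : ∀ i, (G.B i →₀ MvPolynomial σ K) →ₗ[MvPolynomial σ K] (F.B i →₀ MvPolynomial σ K),
      (∀ i, IsGrMap (G.deg i) (F.deg i) e (φ i)) ∧ (∀ x, F.ε (φ 0 x) = f * G.ε x) ∧
      ∀ i x, F.d i (φ (i + 1) x) = φ i (G.d i x) := by
  obtain ⟨φ₀, hφ₀, hφ₀'⟩ := F.exists_base G hI hf
  have hr : ∀ x, φ₀ (G.d 0 x) ∈ LinearMap.range (F.d 0) := by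
    intro x
    have : G.d 0 x ∈ LinearMap.range (G.d 0) := ⟨x, rfl⟩
    rw [G.exact0, Submodule.mem_comap] at this
    rw [F.exact0, Submodule.mem_comap, hφ₀']
    exact (hcol _).1 this
  let P : ℕ → Type _ := fun i =>
    {φ : (G.B i →₀ MvPolynomial σ K) →ₗ[MvPolynomial σ K] (F.B i →₀ MvPolynomial σ K) //
      IsGrMap (G.deg i) (F.deg i) e φ ∧ ∀ x, φ (G.d i x) ∈ LinearMap.range (F.d i)}
  have step : ∀ i (p : P i), ∃ q : P (i + 1), ∀ x, F.d i (q.1 x) = p.1 (G.d i x) := by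
    rintro i ⟨φ, h1, h2⟩
    obtain ⟨φ', h3, h4, h5⟩ := F.exists_step G i φ h1 h2
    exact ⟨⟨φ', h3, h5⟩, h4⟩
  choose nxt hnxt using step
  let sq : ∀ i, P i := fun i => Nat.rec (motive := P) ⟨φ₀, hφ₀, hr⟩ nxt i
  exact ⟨fun i => (sq i).1, fun i => (sq i).2.1, hφ₀', fun i x => hnxt i (sq i) x⟩

/-- Basis of the mapping cone. -/
def coneB (B B' : ℕ → Type) : ℕ → Type
  | 0 => B 0
  | i + 1 => B (i + 1) ⊕ B' i

def coneDeg (B B' : ℕ → Type) (deg : ∀ i, B i → ℕ) (deg' : ∀ i, B' i → ℕ) (e : ℕ) :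
    ∀ i, coneB B B' i → ℕ
  | 0 => deg 0
  | i + 1 => Sum.elim (deg (i + 1)) (fun b => deg' i b + e)

noncomputable def cone0 {R A B C : Type*} [CommRing R] (d : (A →₀ R) →ₗ[R] (C →₀ R))
    (φ : (B →₀ R) →ₗ[R] (C →₀ R)) : (A ⊕ B →₀ R) →ₗ[R] (C →₀ R) :=
  (d.coprod φ) ∘ₗ (Finsupp.sumFinsuppLEquivProdFinsupp R).toLinearMap

noncomputable def cone1 {R A B C D : Type*} [CommRing R] (d : (A →₀ R) →ₗ[R] (C →₀ R))
    (φ : (B →₀ R) →ₗ[R] (C →₀ R)) (d' : (B →₀ R) →ₗ[R] (D →₀ R)) :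
    (A ⊕ B →₀ R) →ₗ[R] (C ⊕ D →₀ R) :=
  (Finsupp.sumFinsuppLEquivProdFinsupp R).symm.toLinearMap ∘ₗ
      ((d.coprod φ).prod (-(d' ∘ₗ LinearMap.snd R _ _))) ∘ₗ
      (Finsupp.sumFinsuppLEquivProdFinsupp R).toLinearMap

noncomputable def coneD {R : Type*} [CommRing R] (B B' : ℕ → Type)
    (d : ∀ i, (B (i + 1) →₀ R) →ₗ[R] (B i →₀ R))
    (d' : ∀ i, (B' (i + 1) →₀ R) →ₗ[R] (B' i →₀ R))
    (φ : ∀ i, (B' i →₀ R) →ₗ[R] (B i →₀ R)) :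
    ∀ i, (coneB B B' (i + 1) →₀ R) →ₗ[R] (coneB B B' i →₀ R)
  | 0 => cone0 (d 0) (φ 0)
  | i + 1 => cone1 (d (i + 1)) (φ (i + 1)) (d' i)

lemma sumE_inl {R α β : Type*} [CommRing R] (a : α) :
    Finsupp.sumFinsuppLEquivProdFinsupp R (Finsupp.single (Sum.inl a : α ⊕ β) (1 : R)) =
      (Finsupp.single a 1, 0) := by
  classical
  apply Prod.ext <;> ext <;> simp [Finsupp.single_apply]

lemma sumE_inr {R α β : Type*} [CommRing R] (b : β) :
    Finsupp.sumFinsuppLEquivProdFinsupp R (Finsupp.single (Sum.inr b : α ⊕ β) (1 : R)) =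
      (0, Finsupp.single b 1) := by
  classical
  apply Prod.ext <;> ext <;> simp [Finsupp.single_apply]

section
variable {R A B C D : Type*} [CommRing R] (d : (A →₀ R) →ₗ[R] (C →₀ R))
    (φ : (B →₀ R) →ₗ[R] (C →₀ R)) (d' : (B →₀ R) →ₗ[R] (D →₀ R))

lemma cone0_symm (a b) :
    cone0 d φ ((Finsupp.sumFinsuppLEquivProdFinsupp R).symm (a, b)) = d a + φ b := by
  simp only [cone0, LinearMap.comp_apply, LinearEquiv.coe_coe, LinearEquiv.apply_symm_apply,
    LinearMap.coprod_apply]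

lemma cone1_symm (a b) :
    cone1 d φ d' ((Finsupp.sumFinsuppLEquivProdFinsupp R).symm (a, b)) =
      (Finsupp.sumFinsuppLEquivProdFinsupp R).symm (d a + φ b, - d' b) := by
  simp only [cone1, LinearMap.comp_apply, LinearEquiv.coe_coe, LinearEquiv.apply_symm_apply]
  rfl

lemma cone0_inl (a : A) : cone0 d φ (Finsupp.single (Sum.inl a) 1) = d (Finsupp.single a 1) := by
  simp only [cone0, LinearMap.comp_apply, LinearEquiv.coe_coe, sumE_inl,
    LinearMap.coprod_apply, map_zero, add_zero]

lemma cone0_inr (a : B) : cone0 d φ (Finsupp.single (Sum.inr a) 1) = φ (Finsupp.single a 1) := by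
  simp only [cone0, LinearMap.comp_apply, LinearEquiv.coe_coe, sumE_inr,
    LinearMap.coprod_apply, map_zero, zero_add]

lemma cone1_inl_inl (a : A) (c : C) :
    cone1 d φ d' (Finsupp.single (Sum.inl a) 1) (Sum.inl c) = d (Finsupp.single a 1) c := by
  simp only [cone1, LinearMap.comp_apply, LinearEquiv.coe_coe, sumE_inl]
  simp

lemma cone1_inl_inr (a : A) (c : D) :
    cone1 d φ d' (Finsupp.single (Sum.inl a) 1) (Sum.inr c) = 0 := by
  simp only [cone1, LinearMap.comp_apply, LinearEquiv.coe_coe, sumE_inl]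
  simp

lemma cone1_inr_inl (a : B) (c : C) :
    cone1 d φ d' (Finsupp.single (Sum.inr a) 1) (Sum.inl c) = φ (Finsupp.single a 1) c := by
  simp only [cone1, LinearMap.comp_apply, LinearEquiv.coe_coe, sumE_inr]
  simp

lemma cone1_inr_inr (a : B) (c : D) :
    cone1 d φ d' (Finsupp.single (Sum.inr a) 1) (Sum.inr c) = - d' (Finsupp.single a 1) c := by
  simp only [cone1, LinearMap.comp_apply, LinearEquiv.coe_coe, sumE_inr]
  simp

lemma mem_range_cone0 (x) :
    x ∈ LinearMap.range (cone0 d φ) ↔ ∃ a b, d a + φ b = x := by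
  rw [LinearMap.mem_range, (Finsupp.sumFinsuppLEquivProdFinsupp R).symm.surjective.exists,
    Prod.exists]
  simp only [cone0_symm]

lemma mem_range_cone1 (a b) :
    (Finsupp.sumFinsuppLEquivProdFinsupp R).symm (a, b) ∈ LinearMap.range (cone1 d φ d') ↔
      ∃ a' b', d a' + φ b' = a ∧ - d' b' = b := by
  rw [LinearMap.mem_range, (Finsupp.sumFinsuppLEquivProdFinsupp R).symm.surjective.exists,
    Prod.exists]
  simp only [cone1_symm, (Finsupp.sumFinsuppLEquivProdFinsupp R).symm.injective.eq_iff,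
    Prod.mk.injEq]

end

lemma coeff_zero_of_deg {B C : Type*} {degB : B → ℕ} {degC : C → ℕ} {e : ℕ}
    {f : (B →₀ MvPolynomial σ K) →ₗ[MvPolynomial σ K] (C →₀ MvPolynomial σ K)}
    (hf : IsGrMap degB degC e f) (b : B) (c : C) (h : degC c < degB b + e) :
    coeff 0 (f (Finsupp.single b 1) c) = 0 := by
  by_contra h0
  have := hf b c 0 h0
  rw [mdeg_zero'] at this
  omega

lemma exists_cone (F : MinGradedFreeRes K σ I) (G : MinGradedFreeRes K σ I')
    (hI : ∀ p ∈ I, coeff 0 p = 0) {f : MvPolynomial σ K} {e : ℕ} (hf : f.IsHomogeneous e)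
    (hcol : ∀ p, p ∈ I' ↔ f * p ∈ I) (hdeg : ∀ i b c, F.deg i c < G.deg i b + e) :
    ∃ H : MinGradedFreeRes K σ (I ⊔ Ideal.span {f}),
      (∀ j, H.betti 0 j = F.betti 0 j) ∧
      ∀ i j, H.betti (i + 1) j =
        F.betti (i + 1) j + if e ≤ j then G.betti i (j - e) else 0 := by
  obtain ⟨φ, hφ, hφ0, hφd⟩ := exists_chain_map F G hI hf hcol
  have hGd : ∀ i x, G.d i (G.d (i + 1) x) = 0 := G.d_d
  have hFd : ∀ i x, F.d i (F.d (i + 1) x) = 0 := F.d_d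
  have hex0 : LinearMap.range (cone0 (F.d 0) (φ 0)) =
      Submodule.comap F.ε ((I ⊔ Ideal.span {f} : Ideal _) : Submodule _ _) := by
    ext x
    rw [mem_range_cone0, Submodule.mem_comap]
    constructor
    · rintro ⟨a, b, rfl⟩
      rw [map_add, hφ0]
      refine Ideal.add_mem _ (Ideal.mem_sup_left ?_) (Ideal.mem_sup_right ?_)
      · have : F.d 0 a ∈ LinearMap.range (F.d 0) := ⟨_, rfl⟩
        rw [F.exact0, Submodule.mem_comap] at this
        exact this
      · exact Ideal.mul_mem_right _ _ (Ideal.mem_span_singleton_self f)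
    · intro hx
      obtain ⟨a, ha, b, hb, hab⟩ := Submodule.mem_sup.1 hx
      obtain ⟨s, rfl⟩ := Ideal.mem_span_singleton.1 hb
      obtain ⟨t, ht⟩ := G.surj s
      have h1 : x - φ 0 t ∈ LinearMap.range (F.d 0) := by
        rw [F.exact0, Submodule.mem_comap, map_sub, hφ0]
        have : F.ε x - f * G.ε t = a - f * (G.ε t - s) := by
          rw [← hab]; ring
        rw [this]
        exact Ideal.sub_mem _ ha ((hcol _).1 ht)
      obtain ⟨y, hy⟩ := h1
      exact ⟨y, t, by rw [hy]; exact sub_add_cancel _ _⟩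
  have hex1 : LinearMap.range (cone1 (F.d 1) (φ 1) (G.d 0)) =
      LinearMap.ker (cone0 (F.d 0) (φ 0)) := by
    ext x
    obtain ⟨⟨a, b⟩, rfl⟩ :=
      (Finsupp.sumFinsuppLEquivProdFinsupp (MvPolynomial σ K)).symm.surjective x
    rw [mem_range_cone1, LinearMap.mem_ker, cone0_symm]
    constructor
    · rintro ⟨a', b', rfl, rfl⟩
      rw [map_add, hFd, hφd, map_neg]
      simp
    · intro h
      have hb : b ∈ LinearMap.range (G.d 0) := by
        rw [G.exact0, Submodule.mem_comap]
        refine (hcol _).2 ?_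
        rw [← hφ0, ← neg_eq_of_add_eq_zero_right h, map_neg]
        refine Ideal.neg_mem_iff _ |>.2 ?_
        have : F.d 0 a ∈ LinearMap.range (F.d 0) := ⟨_, rfl⟩
        rw [F.exact0, Submodule.mem_comap] at this
        exact this
      obtain ⟨b', rfl⟩ := hb
      have ha : a + φ 1 b' ∈ LinearMap.range (F.d 1) := by
        rw [F.exact, LinearMap.mem_ker, map_add, hφd]
        exact h
      obtain ⟨a', ha'⟩ := ha
      exact ⟨a', -b', by simp [ha'], by simp⟩
  have hex2 : ∀ i, LinearMap.range (cone1 (F.d (i + 2)) (φ (i + 2)) (G.d (i + 1))) =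
      LinearMap.ker (cone1 (F.d (i + 1)) (φ (i + 1)) (G.d i)) := by
    intro i
    ext x
    obtain ⟨⟨a, b⟩, rfl⟩ :=
      (Finsupp.sumFinsuppLEquivProdFinsupp (MvPolynomial σ K)).symm.surjective x
    rw [mem_range_cone1, LinearMap.mem_ker, cone1_symm, LinearEquiv.map_eq_zero_iff,
      Prod.mk_eq_zero, neg_eq_zero]
    constructor
    · rintro ⟨a', b', rfl, rfl⟩
      rw [map_add, hFd, hφd, map_neg, map_neg, hGd]
      simp
    · rintro ⟨h, h'⟩
      have hb : b ∈ LinearMap.range (G.d (i + 1)) := by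
        rw [G.exact, LinearMap.mem_ker, h']
      obtain ⟨b', rfl⟩ := hb
      have ha : a + φ (i + 2) b' ∈ LinearMap.range (F.d (i + 2)) := by
        rw [F.exact, LinearMap.mem_ker, map_add, hφd]
        exact h
      obtain ⟨a', ha'⟩ := ha
      exact ⟨a', -b', by simp [ha'], by simp⟩
  have hsurj : ∀ s : MvPolynomial σ K, ∃ t, F.ε t - s ∈ I ⊔ Ideal.span {f} := by
    intro s
    obtain ⟨t, ht⟩ := F.surj s
    exact ⟨t, Ideal.mem_sup_left ht⟩
  refine ⟨{ B := coneB F.B G.B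
            finB := ?_
            deg := coneDeg F.B G.B F.deg G.deg e
            d := coneD F.B G.B F.d G.d φ
            ε := F.ε
            ε_homog := F.ε_homog
            surj := hsurj
            exact0 := hex0
            exact := ?_
            homog := ?_
            minimal := ?_ }, ?_, ?_⟩
  · intro i
    have := F.finB
    have := G.finB
    cases i <;> simp only [coneB] <;> infer_instance
  · intro i
    cases i with
    | zero => exact hex1
    | succ i => exact hex2 i
  · intro i
    cases i with
    | zero =>
      rintro (b | b) c m hm
      · have h := congrArg (fun v => v c) (cone0_inl (F.d 0) (φ 0) b)
        exact F.homog 0 b c m (by rw [← h]; exact hm)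
      · have h := congrArg (fun v => v c) (cone0_inr (F.d 0) (φ 0) b)
        exact hφ 0 b c m (by rw [← mem_support_iff, ← h]; exact hm)
    | succ i =>
      rintro (b | b) (c | c) m hm
      · have h := cone1_inl_inl (F.d (i + 1)) (φ (i + 1)) (G.d i) b c
        exact F.homog (i + 1) b c m (by rw [← h]; exact hm)
      · have h := cone1_inl_inr (F.d (i + 1)) (φ (i + 1)) (G.d i) b c
        have h2 : m ∈ (cone1 (F.d (i + 1)) (φ (i + 1)) (G.d i)
          (Finsupp.single (Sum.inl b) 1) (Sum.inr c)).support := hm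
        rw [h] at h2
        simp at h2
      · have h := cone1_inr_inl (F.d (i + 1)) (φ (i + 1)) (G.d i) b c
        exact hφ (i + 1) b c m (by rw [← mem_support_iff, ← h]; exact hm)
      · have h := cone1_inr_inr (F.d (i + 1)) (φ (i + 1)) (G.d i) b c
        have h2 : m ∈ (cone1 (F.d (i + 1)) (φ (i + 1)) (G.d i)
          (Finsupp.single (Sum.inr b) 1) (Sum.inr c)).support := hm
        rw [h, support_neg] at h2
        have h3 := G.homog i b c m h2
        change mdeg m + (G.deg i c + e) = G.deg (i + 1) b + e
        omega
  · intro i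
    cases i with
    | zero =>
      rintro (b | b) c
      · have h := congrArg (fun v => v c) (cone0_inl (F.d 0) (φ 0) b)
        exact (congrArg (coeff 0) h).trans (F.minimal 0 b c)
      · have h := congrArg (fun v => v c) (cone0_inr (F.d 0) (φ 0) b)
        exact (congrArg (coeff 0) h).trans (coeff_zero_of_deg (hφ 0) b c (hdeg 0 b c))
    | succ i =>
      rintro (b | b) (c | c)
      · have h := cone1_inl_inl (F.d (i + 1)) (φ (i + 1)) (G.d i) b c
        exact (congrArg (coeff 0) h).trans (F.minimal (i + 1) b c)
      · have h := cone1_inl_inr (F.d (i + 1)) (φ (i + 1)) (G.d i) b c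
        exact (congrArg (coeff 0) h).trans (coeff_zero _)
      · have h := cone1_inr_inl (F.d (i + 1)) (φ (i + 1)) (G.d i) b c
        exact (congrArg (coeff 0) h).trans
          (coeff_zero_of_deg (hφ (i + 1)) b c (hdeg (i + 1) b c))
      · have h := cone1_inr_inr (F.d (i + 1)) (φ (i + 1)) (G.d i) b c
        refine (congrArg (coeff 0) h).trans ?_
        rw [coeff_neg, G.minimal, neg_zero]
  · intro j
    rfl
  · intro i j
    have := F.finB
    have := G.finB
    change Nat.card {b : F.B (i + 1) ⊕ G.B i //
      Sum.elim (F.deg (i + 1)) (fun b => G.deg i b + e) b = j} = _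
    rw [Nat.card_congr (Equiv.subtypeSum), Nat.card_sum]
    congr 1
    simp only [Sum.elim_inr]
    split_ifs with h
    · refine Nat.card_congr (Equiv.subtypeEquivRight fun b => ?_)
      omega
    · rw [Nat.card_eq_zero]
      left
      constructor
      rintro ⟨b, hb⟩
      omega

end Cone
section Mono

variable {K : Type*} [Field K] {σ : Type*}

/-- `S/I` has a minimal graded free resolution with Betti table `c`. -/
def HasBetti (I : Ideal (MvPolynomial σ K)) (c : ℕ → ℕ → ℕ) : Prop :=
  ∃ F : MinGradedFreeRes K σ I, ∀ i j, F.betti i j = c i j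

lemma hasBetti_bot :
    HasBetti (⊥ : Ideal (MvPolynomial σ K)) (fun i j => if i = 0 ∧ j = 0 then 1 else 0) := by
  have he : ∀ i : ℕ, IsEmpty (PLift (i + 1 = 0)) := fun i => ⟨fun h => by simpa using h.down⟩
  refine ⟨{ B := fun i => PLift (i = 0)
            finB := fun i => inferInstance
            deg := fun _ _ => 0
            d := fun _ => 0
            ε := Finsupp.lapply ⟨rfl⟩
            ε_homog := ?_
            surj := ?_
            exact0 := ?_
            exact := ?_
            homog := ?_
            minimal := ?_ }, ?_⟩
  · intro b
    have : b = ⟨rfl⟩ := Subsingleton.elim _ _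
    subst this
    simpa using isHomogeneous_one _ _
  · intro s
    exact ⟨Finsupp.single ⟨rfl⟩ s, by simp⟩
  · ext x
    have : x = 0 ↔ x ⟨rfl⟩ = 0 := by
      constructor
      · rintro rfl; rfl
      · intro h
        ext1 b
        have : b = ⟨rfl⟩ := Subsingleton.elim _ _
        rw [this, h]; rfl
    simp [this]
  · intro i
    have := he i
    exact Subsingleton.elim _ _
  · intro i b
    exact (he i).elim b
  · intro i b
    exact (he i).elim b
  · intro i j
    change Nat.card {b : PLift (i = 0) // 0 = j} = if i = 0 ∧ j = 0 then 1 else 0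
    split_ifs with h
    · obtain ⟨rfl, rfl⟩ := h
      rw [Nat.card_eq_one_iff_unique]
      exact ⟨inferInstance, ⟨⟨⟨rfl⟩, rfl⟩⟩⟩
    · rw [Nat.card_eq_zero]
      left
      constructor
      rintro ⟨b, hb⟩
      exact h ⟨b.down, hb.symm⟩

lemma HasBetti.cone {I I' : Ideal (MvPolynomial σ K)} {c c' : ℕ → ℕ → ℕ}
    (h : HasBetti I c) (h' : HasBetti I' c')
    (hI : ∀ p ∈ I, coeff 0 p = 0) {f : MvPolynomial σ K} {e : ℕ} (hf : f.IsHomogeneous e)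
    (hcol : ∀ p, p ∈ I' ↔ f * p ∈ I)
    (hdeg : ∀ i j j', c i j ≠ 0 → c' i j' ≠ 0 → j < j' + e) {c'' : ℕ → ℕ → ℕ}
    (hc0 : ∀ j, c'' 0 j = c 0 j)
    (hc : ∀ i j, c'' (i + 1) j = c (i + 1) j + if e ≤ j then c' i (j - e) else 0) :
    HasBetti (I ⊔ Ideal.span {f}) c'' := by
  obtain ⟨F, hF⟩ := h
  obtain ⟨G, hG⟩ := h'
  obtain ⟨H, h1, h2⟩ := exists_cone F G hI hf hcol (by
    intro i b c
    have := F.finB i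
    have := G.finB i
    apply hdeg i
    · rw [← hF]
      have : Nonempty {b // F.deg i b = F.deg i c} := ⟨⟨c, rfl⟩⟩
      exact Nat.card_pos.ne'
    · rw [← hG]
      have : Nonempty {c // G.deg i c = G.deg i b} := ⟨⟨b, rfl⟩⟩
      exact Nat.card_pos.ne')
  refine ⟨H, fun i j => ?_⟩
  cases i with
  | zero => rw [h1, hF, hc0]
  | succ i => rw [h2, hF, hG, hc]

lemma coeff_zero_span_X (s : Set σ) (p : MvPolynomial σ K)
    (hp : p ∈ Ideal.span (X '' s : Set (MvPolynomial σ K))) : coeff 0 p = 0 := by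
  rw [mem_ideal_span_X_image] at hp
  by_contra h
  obtain ⟨i, _, hi⟩ := hp 0 (mem_support_iff.2 h)
  simp at hi

lemma hasBetti_koszul (s : Finset σ) :
    HasBetti (Ideal.span (X '' (s : Set σ) : Set (MvPolynomial σ K)))
      (fun i j => if i = j then s.card.choose i else 0) := by
  classical
  induction s using Finset.induction_on with
  | empty =>
    obtain ⟨F, hF⟩ := hasBetti_bot (K := K) (σ := σ)
    have h0 : Ideal.span (X '' ((∅ : Finset σ) : Set σ) : Set (MvPolynomial σ K)) = ⊥ := by simp
    rw [h0]
    refine ⟨F, fun i j => ?_⟩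
    rw [hF]
    cases i <;> cases j <;> simp
  | insert a s ha ih =>
    have h0 : Ideal.span (X '' ((insert a s : Finset σ) : Set σ) : Set (MvPolynomial σ K)) =
        Ideal.span (X '' (s : Set σ)) ⊔ Ideal.span {X a} := by
      rw [← Ideal.span_union, Finset.coe_insert, Set.image_insert_eq, Set.union_singleton]
    rw [h0]
    refine ih.cone ih (fun p hp => coeff_zero_span_X _ p hp) (isHomogeneous_X K a) ?_ ?_ ?_ ?_
    · intro p
      refine ⟨fun h => Ideal.mul_mem_left _ _ h, fun h => ?_⟩
      rw [mem_ideal_span_X_image] at h ⊢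
      intro m hm
      obtain ⟨i, hi, hne⟩ := h (Finsupp.single a 1 + m) (by
        rw [mem_support_iff, coeff_X_mul]; exact mem_support_iff.1 hm)
      refine ⟨i, hi, ?_⟩
      have : a ≠ i := fun h => ha (h ▸ hi)
      simpa [Finsupp.single_apply, this] using hne
    · intro i j j' h1 h2
      simp only [ne_eq, ite_eq_right_iff, not_forall] at h1 h2
      obtain ⟨h1, _⟩ := h1
      obtain ⟨h2, _⟩ := h2
      omega
    · intro j
      simp
    · intro i j
      rw [Finset.card_insert_of_notMem ha, Nat.choose_succ_succ]
      cases j with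
      | zero => simp
      | succ j =>
        simp only [Nat.add_right_cancel_iff, Nat.add_sub_cancel]
        by_cases h : i = j
        · simp [h, add_comm]
        · simp [h]

/-- The monomial ideal with given exponents. -/
noncomputable def monIdeal (K : Type*) [Field K] {σ : Type*} (E : Set (σ →₀ ℕ)) :
    Ideal (MvPolynomial σ K) :=
  Ideal.span ((fun s => monomial s (1 : K)) '' E)

lemma mem_monIdeal {E : Set (σ →₀ ℕ)} {p : MvPolynomial σ K} :
    p ∈ monIdeal K E ↔ ∀ m, coeff m p ≠ 0 → ∃ s ∈ E, s ≤ m := by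
  rw [monIdeal, mem_ideal_span_monomial_image]
  simp only [mem_support_iff]

lemma coeff_zero_monIdeal {E : Set (σ →₀ ℕ)} (hE : 0 ∉ E) {p : MvPolynomial σ K}
    (hp : p ∈ monIdeal K E) : coeff 0 p = 0 := by
  by_contra h
  obtain ⟨s, hs, h0⟩ := mem_monIdeal.1 hp 0 h
  rw [nonpos_iff_eq_zero.1 h0] at hs
  exact hE hs

lemma monIdeal_insert (E : Set (σ →₀ ℕ)) (u : σ →₀ ℕ) :
    monIdeal K (insert u E) = monIdeal K E ⊔ Ideal.span {monomial u (1 : K)} := by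
  rw [monIdeal, monIdeal, ← Ideal.span_union, Set.image_insert_eq, Set.union_singleton]

/-- One linear quotient step. -/
lemma HasBetti.step {E : Set (σ →₀ ℕ)} (hE : 0 ∉ E) {c : ℕ → ℕ → ℕ}
    (h : HasBetti (monIdeal K E) c) (u : σ →₀ ℕ) (s : Finset σ)
    (hcol : ∀ m : σ →₀ ℕ, (∃ i ∈ s, m i ≠ 0) ↔ ∃ v ∈ E, v ≤ u + m)
    (hdeg : ∀ i j, c i j ≠ 0 → j < i + mdeg u) :
    HasBetti (monIdeal K (insert u E)) (fun i j => c i j +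
      if 1 ≤ i ∧ j + 1 = i + mdeg u then s.card.choose (i - 1) else 0) := by
  rw [monIdeal_insert]
  refine h.cone (hasBetti_koszul s) (fun p hp => coeff_zero_monIdeal hE hp)
    (isHomogeneous_monomial 1 (mdeg_eq u).symm) ?_ ?_ ?_ ?_
  · intro p
    rw [mem_ideal_span_X_image, mem_monIdeal]
    constructor
    · intro hp m hm
      rw [coeff_monomial_mul'] at hm
      split_ifs at hm with hle
      · obtain ⟨i, hi, hne⟩ := hp (m - u) (by rw [mem_support_iff]; simpa using hm)
        have := (hcol (m - u)).1 ⟨i, hi, hne⟩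
        rwa [add_tsub_cancel_of_le hle] at this
      · simp at hm
    · intro hp m hm
      have h1 := hp (u + m) (by
        rw [coeff_monomial_mul, one_mul]; exact mem_support_iff.1 hm)
      obtain ⟨i, hi, hne⟩ := (hcol m).2 h1
      exact ⟨i, hi, hne⟩
  · intro i j j' h1 h2
    simp only [ne_eq, ite_eq_right_iff, not_forall] at h2
    obtain ⟨h2, _⟩ := h2
    have := hdeg i j h1
    omega
  · intro j
    simp
  · intro i j
    congr 1
    by_cases h1 : mdeg u ≤ j
    · rw [if_pos h1]
      by_cases h2 : j = i + mdeg u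
      · rw [if_pos (by omega), if_pos (by omega)]; rfl
      · rw [if_neg (by omega), if_neg (by omega)]
    · rw [if_neg h1, if_neg (by omega)]

end Mono

section Diamond

variable {n : ℕ}

/-- Index of `y_i`. -/
def yi (i : Fin n) : Fin (n + 2) := i.succ.castSucc

lemma yi_inj : Function.Injective (yi (n := n)) := by
  intro a b h
  simpa [yi] using h

lemma yi_ne_zero (i : Fin n) : yi i ≠ 0 := by
  simp [yi, Fin.ext_iff]

lemma yi_ne_last (i : Fin n) : yi i ≠ Fin.last (n + 1) := by
  have := i.2
  simp [yi, Fin.ext_iff]; omega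

/-- Exponent of `y_i`. -/
noncomputable def ye (i : Fin n) : Fin (n + 2) →₀ ℕ := Finsupp.single (yi i) 1

/-- Exponent of `xz`. -/
noncomputable def xze (n : ℕ) : Fin (n + 2) →₀ ℕ :=
  Finsupp.single 0 1 + Finsupp.single (Fin.last (n + 1)) 1

lemma ye_apply (i j : Fin n) : ye i (yi j) = if i = j then 1 else 0 := by
  simp [ye, Finsupp.single_apply, yi_inj.eq_iff]

lemma xze_apply (j : Fin n) : xze n (yi j) = 0 := by
  simp [xze, Finsupp.single_apply, (yi_ne_zero j).symm, (yi_ne_last j).symm]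

lemma mdeg_ye (i : Fin n) : mdeg (ye i) = 1 := by simp [ye, mdeg]

lemma mdeg_xze : mdeg (xze n) = 2 := by
  rw [xze, mdeg_add']; simp [mdeg]

lemma ye_add_le {a b : Fin n} (hab : a ≠ b) {v : Fin (n + 2) →₀ ℕ} (ha : v (yi a) ≠ 0)
    (hb : v (yi b) ≠ 0) : ye a + ye b ≤ v := by
  intro l
  rw [Finsupp.add_apply, ye, ye, Finsupp.single_apply, Finsupp.single_apply]
  have := yi_inj.ne hab
  split_ifs with h1 h2 h2
  · exact absurd (h1.trans h2.symm) this
  · subst h1; omega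
  · subst h2; omega
  · omega

/-- The quadratic exponents, up to the pair `(i, k)`. -/
def EJ (n k i : ℕ) : Set (Fin (n + 2) →₀ ℕ) :=
  {v | ∃ a b : Fin n, a < b ∧ ((b : ℕ) < k ∨ ((b : ℕ) = k ∧ (a : ℕ) < i)) ∧ v = ye a + ye b}

lemma zero_notMem_EJ (k i : ℕ) : 0 ∉ EJ n k i := by
  rintro ⟨a, b, -, -, h⟩
  have := congrArg mdeg h
  rw [mdeg_add', mdeg_ye, mdeg_ye, mdeg_zero'] at this
  omega

lemma EJ_insert (k i : Fin n) (hik : i < k) :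
    EJ n k (i + 1) = insert (ye i + ye k) (EJ n k i) := by
  ext v
  constructor
  · rintro ⟨a, b, hab, h, rfl⟩
    by_cases h1 : (b : ℕ) = k ∧ (a : ℕ) = i
    · left
      rw [Fin.ext h1.1, Fin.ext h1.2]
    · right
      exact ⟨a, b, hab, by omega, rfl⟩
  · rintro (rfl | ⟨a, b, hab, h, rfl⟩)
    · exact ⟨i, k, hik, by omega, rfl⟩
    · exact ⟨a, b, hab, by omega, rfl⟩

lemma EJ_succ (k : ℕ) : EJ n (k + 1) 0 = EJ n k k := by
  ext v
  constructor
  · rintro ⟨a, b, hab, h, rfl⟩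
    exact ⟨a, b, hab, by omega, rfl⟩
  · rintro ⟨a, b, hab, h, rfl⟩
    exact ⟨a, b, hab, by omega, rfl⟩

lemma EJ_zero : EJ n 0 0 = ∅ := by
  ext v
  simp only [Set.mem_empty_iff_false, iff_false]
  rintro ⟨a, b, hab, h, rfl⟩
  omega

/-- The quadratic stage. -/
def StageA (K : Type*) [Field K] (n : ℕ) (E : Set (Fin (n + 2) →₀ ℕ)) : Prop :=
  ∃ c, HasBetti (monIdeal K E) c ∧ ∀ i j, c i j ≠ 0 → j ≤ i + 1 ∧ i < n

lemma stageA_empty (K : Type*) [Field K] (hn : 1 ≤ n) : StageA K n ∅ := by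
  refine ⟨fun i j => if i = 0 ∧ j = 0 then 1 else 0, ?_, ?_⟩
  · have : monIdeal K (∅ : Set (Fin (n + 2) →₀ ℕ)) = ⊥ := by simp [monIdeal]
    rw [this]
    exact hasBetti_bot
  · intro i j h
    simp only [ne_eq, ite_eq_right_iff, not_forall] at h
    obtain ⟨h, _⟩ := h
    omega

lemma stageA_step (K : Type*) [Field K] (k i : Fin n) (hik : i < k)
    (h : StageA K n (EJ n k i)) : StageA K n (EJ n k (i + 1)) := by
  classical
  obtain ⟨c, hc, hcd⟩ := h
  rw [EJ_insert k i hik]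
  have hmd : mdeg (ye i + ye k) = 2 := by rw [mdeg_add', mdeg_ye, mdeg_ye]
  let s : Finset (Fin n) := (Finset.Iio k).erase i
  have hs : s.card = k - 1 := by
    rw [Finset.card_erase_of_mem (by simpa using hik)]; simp
  refine ⟨_, hc.step (zero_notMem_EJ _ _) (ye i + ye k) (s.image yi) ?_ ?_, ?_⟩
  · intro m
    constructor
    · rintro ⟨l0, hl0, hm⟩
      obtain ⟨l, hl, rfl⟩ := Finset.mem_image.1 hl0
      simp only [s, Finset.mem_erase, Finset.mem_Iio] at hl
      have hmi : (ye i + ye k + m) (yi i) ≠ 0 := by simp [ye_apply]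
      have hml : (ye i + ye k + m) (yi l) ≠ 0 := by simp [hm]
      rcases lt_or_gt_of_ne hl.1 with hlt | hlt
      · exact ⟨_, ⟨l, i, hlt, by omega, rfl⟩, ye_add_le hl.1 hml hmi⟩
      · exact ⟨_, ⟨i, l, hlt, by omega, rfl⟩, ye_add_le hl.1.symm hmi hml⟩
    · rintro ⟨v, ⟨a, b, hab, hb, rfl⟩, hle⟩
      have key : ∀ l : Fin n, l < k → l ≠ i → (ye a + ye b) (yi l) ≠ 0 →
          ∃ i ∈ s.image yi, m i ≠ 0 := by
        intro l hl hli hne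
        refine ⟨yi l, Finset.mem_image_of_mem _ (by simp [s, hl, hli]), ?_⟩
        have h1 := hle (yi l)
        rw [Finsupp.add_apply (ye i + ye k), Finsupp.add_apply (ye i), ye_apply i, ye_apply k,
          if_neg hli.symm, if_neg hl.ne'] at h1
        omega
      by_cases hai : a = i
      · exact key b (by omega) (by omega) (by simp [ye_apply])
      · exact key a (by omega) hai (by simp [ye_apply])
  · intro i' j h
    have := hcd i' j h
    omega
  · intro i' j h
    beta_reduce at h
    by_cases h0 : c i' j = 0
    · rw [h0, zero_add] at h
      simp only [ne_eq, ite_eq_right_iff, not_forall] at h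
      obtain ⟨h1, h2⟩ := h
      rw [Finset.card_image_of_injective _ yi_inj, hs, Nat.choose_eq_zero_iff, not_lt] at h2
      have := k.2
      have : (i : ℕ) < k := hik
      omega
    · exact hcd i' j h0

lemma stageA_all (K : Type*) [Field K] (hn : 1 ≤ n) : StageA K n (EJ n n 0) := by
  have h : ∀ k, k ≤ n → StageA K n (EJ n k 0) := by
    intro k
    induction k with
    | zero => intro _; rw [EJ_zero]; exact stageA_empty K hn
    | succ k ih =>
      intro hk
      have h2 : ∀ i, i ≤ k → StageA K n (EJ n k i) := by
        intro i
        induction i with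
        | zero => intro _; exact ih (by omega)
        | succ i ih2 =>
          intro hi
          exact stageA_step K ⟨k, by omega⟩ ⟨i, by omega⟩ (by simpa using hi) (ih2 (by omega))
      rw [EJ_succ]
      exact h2 k le_rfl
  exact h n le_rfl

/-- Exponents of all the `y_i y_j` and of `x y_k z`, `k < r`. -/
def EB (n r : ℕ) : Set (Fin (n + 2) →₀ ℕ) :=
  EJ n n 0 ∪ {v | ∃ k : Fin n, (k : ℕ) < r ∧ v = xze n + ye k}

lemma zero_notMem_EB (r : ℕ) : 0 ∉ EB n r := by
  rintro (h | ⟨k, -, h⟩)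
  · exact zero_notMem_EJ _ _ h
  · have := congrArg mdeg h
    rw [mdeg_add', mdeg_ye, mdeg_xze, mdeg_zero'] at this
    omega

lemma EB_succ (r : Fin n) : EB n (r + 1) = insert (xze n + ye r) (EB n r) := by
  ext v
  constructor
  · rintro (h | ⟨k, hk, rfl⟩)
    · exact Or.inr (Or.inl h)
    · by_cases h : k = r
      · left; rw [h]
      · exact Or.inr (Or.inr ⟨k, by omega, rfl⟩)
  · rintro (rfl | h | ⟨k, hk, rfl⟩)
    · exact Or.inr ⟨r, by omega, rfl⟩
    · exact Or.inl h
    · exact Or.inr ⟨k, by omega, rfl⟩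

lemma colonB (r : Fin n) (t : ℕ) (ht : 1 ≤ t) (m : Fin (n + 2) →₀ ℕ) :
    (∃ i ∈ (Finset.univ.erase r).image yi, m i ≠ 0) ↔
      ∃ v ∈ EB n r, v ≤ xze n + t • ye r + m := by
  constructor
  · rintro ⟨l0, hl0, hm⟩
    obtain ⟨l, hl, rfl⟩ := Finset.mem_image.1 hl0
    simp only [Finset.mem_erase, Finset.mem_univ, and_true] at hl
    have hmi : (xze n + t • ye r + m) (yi r) ≠ 0 := by simp [ye_apply]; omega
    have hml : (xze n + t • ye r + m) (yi l) ≠ 0 := by simp [hm]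
    rcases lt_or_gt_of_ne hl with hlt | hlt
    · exact ⟨_, Or.inl ⟨l, r, hlt, by omega, rfl⟩, ye_add_le hl hml hmi⟩
    · exact ⟨_, Or.inl ⟨r, l, hlt, by omega, rfl⟩, ye_add_le hl.symm hmi hml⟩
  · rintro ⟨v, hv, hle⟩
    have key : ∀ l : Fin n, l ≠ r → v (yi l) ≠ 0 →
        ∃ i ∈ (Finset.univ.erase r).image yi, m i ≠ 0 := by
      intro l hl hne
      refine ⟨yi l, Finset.mem_image_of_mem _ (by simp [hl]), ?_⟩
      have h1 := hle (yi l)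
      rw [Finsupp.add_apply (xze n + t • ye r), Finsupp.add_apply (xze n), Finsupp.smul_apply,
        ye_apply r, xze_apply, if_neg hl.symm] at h1
      simp only [smul_eq_mul] at h1
      omega
    rcases hv with ⟨a, b, hab, -, rfl⟩ | ⟨k, hk, rfl⟩
    · by_cases har : a = r
      · exact key b (by omega) (by simp [ye_apply])
      · exact key a har (by simp [ye_apply])
    · exact key k (by omega) (by simp [ye_apply])

lemma card_sB (r : Fin n) : ((Finset.univ.erase r).image yi).card = n - 1 := by
  rw [Finset.card_image_of_injective _ yi_inj, Finset.card_erase_of_mem (Finset.mem_univ _)]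
  simp

lemma stageB (K : Type*) [Field K] (hn : 1 ≤ n) (r : ℕ) (hr : r ≤ n - 1) :
    ∃ c, HasBetti (monIdeal K (EB n r)) c ∧ (∀ i j, c i j ≠ 0 → j ≤ i + 2) ∧
      c n (n + 2) = r := by
  induction r with
  | zero =>
    obtain ⟨c, hc, hcd⟩ := stageA_all K hn
    have : EB n 0 = EJ n n 0 := by simp [EB]
    rw [this]
    refine ⟨c, hc, fun i j h => by have := hcd i j h; omega, ?_⟩
    by_contra h
    have := hcd _ _ h
    omega
  | succ r ih =>
    obtain ⟨c, hc, hcd, hcn⟩ := ih (by omega)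
    let r' : Fin n := ⟨r, by omega⟩
    have hmd : mdeg (xze n + ye r') = 3 := by rw [mdeg_add', mdeg_ye, mdeg_xze]
    have hE : EB n (r + 1) = insert (xze n + ye r') (EB n r) := EB_succ r'
    rw [hE]
    refine ⟨_, hc.step (zero_notMem_EB _) (xze n + ye r') ((Finset.univ.erase r').image yi)
      ?_ ?_, ?_, ?_⟩
    · intro m
      have := colonB r' 1 le_rfl m
      rwa [one_smul] at this
    · intro i j h
      have := hcd i j h
      omega
    · intro i j h
      beta_reduce at h
      by_cases h0 : c i j = 0
      · rw [h0, zero_add] at h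
        simp only [ne_eq, ite_eq_right_iff, not_forall] at h
        obtain ⟨h1, h2⟩ := h
        omega
      · exact hcd i j h0
    · beta_reduce
      rw [hcn, card_sB, if_pos (by omega), Nat.choose_self]

lemma stageC (K : Type*) [Field K] (hn : 1 ≤ n) :
    ∃ c, HasBetti (monIdeal K (insert (xze n + 2 • ye ⟨n - 1, by omega⟩) (EB n (n - 1)))) c ∧
      c n (n + 2) = n - 1 := by
  obtain ⟨c, hc, hcd, hcn⟩ := stageB K hn (n - 1) le_rfl
  let r' : Fin n := ⟨n - 1, by omega⟩
  have hmd : mdeg (xze n + 2 • ye r') = 4 := by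
    rw [two_smul, mdeg_add', mdeg_add', mdeg_ye, mdeg_xze]
  refine ⟨_, hc.step (zero_notMem_EB _) (xze n + 2 • ye r') ((Finset.univ.erase r').image yi)
      ?_ ?_, ?_⟩
  · intro m
    exact colonB r' 2 (by omega) m
  · intro i j h
    have := hcd i j h
    omega
  · beta_reduce
    rw [hcn, if_neg (by omega), add_zero]

lemma diamondIni_eq (K : Type*) [Field K] (hn : 1 ≤ n) :
    diamondIni K n hn =
      monIdeal K (insert (xze n + 2 • ye ⟨n - 1, by omega⟩) (EB n (n - 1))) := by
  have hX : ∀ i : Fin n, yP K n i = monomial (ye i) 1 := fun i => rfl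
  have hx : xP K n = monomial (Finsupp.single 0 1) 1 := rfl
  have hz : zP K n = monomial (Finsupp.single (Fin.last (n + 1)) 1) 1 := rfl
  have hxyz : ∀ v, xP K n * monomial v 1 * zP K n = monomial (xze n + v) 1 := by
    intro v
    rw [hx, hz, monomial_mul, monomial_mul, xze]
    simp only [mul_one]
    rw [add_right_comm]

  rw [diamondIni, monIdeal]
  congr 1
  ext f
  constructor
  · rintro ((⟨i, j, hij, rfl⟩ | ⟨k, hk, rfl⟩) | h)
    · exact ⟨ye i + ye j, Or.inr (Or.inl ⟨i, j, hij, by omega, rfl⟩),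
        by simp only [hX, monomial_mul, mul_one]⟩
    · exact ⟨xze n + ye k, Or.inr (Or.inr ⟨k, hk, rfl⟩), by simp only [hX, hxyz]⟩
    · rw [Set.mem_singleton_iff] at h
      refine ⟨_, Or.inl rfl, ?_⟩
      rw [h, hX, monomial_pow, one_pow, hxyz]
  · rintro ⟨v, (rfl | ⟨i, j, hij, -, rfl⟩ | ⟨k, hk, rfl⟩), rfl⟩
    · right
      rw [Set.mem_singleton_iff, hX, monomial_pow, one_pow, hxyz]
    · exact Or.inl (Or.inl ⟨i, j, hij, by simp only [hX, monomial_mul, mul_one]⟩)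
    · exact Or.inl (Or.inr ⟨k, hk, by simp only [hX, hxyz]⟩)

lemma diamondIni_coeff_zero (K : Type*) [Field K] (hn : 1 ≤ n) (p)
    (hp : p ∈ diamondIni K n hn) : coeff 0 p = 0 := by
  rw [diamondIni_eq] at hp
  refine coeff_zero_monIdeal ?_ hp
  rintro (h | h)
  · have := congrArg mdeg h
    rw [mdeg_add', mdeg_xze, mdeg_zero'] at this
    omega
  · exact zero_notMem_EB _ h

end Diamond

theorem diamond_ini_betti_n_np2 (K : Type*) [Field K] (n : ℕ) (hn : 3 ≤ n) :
    Nonempty (MinGradedFreeRes K (Fin (n + 2)) (diamondIni K n (by omega))) ∧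
      ∀ F : MinGradedFreeRes K (Fin (n + 2)) (diamondIni K n (by omega)),
        F.betti n (n + 2) = n - 1 := by
  obtain ⟨c, hB, hc⟩ := stageC (n := n) K (by omega)
  rw [← diamondIni_eq K (by omega)] at hB
  obtain ⟨F₀, hF₀⟩ := hB
  refine ⟨⟨F₀⟩, fun F => ?_⟩
  rw [F.betti_eq F₀ (fun p hp => diamondIni_coeff_zero K _ p hp), hF₀, hc]
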